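/- Let Ω ⊆ ℂ be a domain, let X be the connected component of ∞ in (ℂ∪{∞})∖Ω, and set Ω̂ := (ℂ∪{∞})∖X ⊆ ℂ. Then Ω̂ is a simply connected domain in ℂ containing Ω, and Ω̂ ⊆ G for every simply connected domain G with Ω ⊆ G ⊆ ℂ; consequently Ω̂ equals the intersection of all simply connected domains G with Ω ⊆ G ⊆ ℂ. -/

import Mathlib

open Set OnePoint

/-!
The complement of `Ω̂` in the sphere is the connected set `X`. A loop in `Ω̂` lies in a finite union
of grid squares inside `Ω̂`, and transport along segments is a flat connection on these squares with
values in `π₁(Ω̂)`. Since `X` is connected and contains `∞`, no lattice loop of such squares winds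
around an omitted square; the flat connection is therefore trivial and the loop is null-homotopic.

Conversely, let `G ⊇ Ω` be simply connected. If the complement of `G` in the sphere had a nonempty
compact clopen part `A ⊆ ℂ`, then for `z ∈ A` the branch of `log (w - z)` on `G` would produce a
logarithm of `w - z` on a large circle around `z`. So this complement is connected, and as it
contains `∞` and misses `Ω`, it lies in `X`.
-/

open Filter Topology

section Topology

variable {S : Type*} [TopologicalSpace S]

theorem isClosed_connectedComponentIn {F : Set S} (hF : IsClosed F) (x : S) :
    IsClosed (connectedComponentIn F x) := by
  by_cases hx : x ∈ F
  · rw [connectedComponentIn_eq_image hx]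
    exact hF.isClosedEmbedding_subtypeVal.isClosedMap _ isClosed_connectedComponent
  · simp [connectedComponentIn_eq_empty hx]

theorem isPreconnected_union_of_compl_eq_union [PreconnectedSpace S] {C M N : Set S}
    (hC : IsPreconnected C) (hM : IsOpen M) (hN : IsOpen N) (hMN : Disjoint M N)
    (hcompl : Cᶜ = M ∪ N) : IsPreconnected (C ∪ N) := by
  have hCN : C ∪ N = Mᶜ := by
    ext x
    have hx := Set.ext_iff.1 hcompl x
    grind
  have hclosed : IsClosed (C ∪ N) := hCN ▸ hM.isClosed_compl
  -- The part of `C ∪ N` on the side not containing `C` is clopen in the whole space.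
  have subset_of_subset {u v : Set S} (hu : IsClosed u) (hv : IsClosed v) (huv : Disjoint u v)
      (hcover : C ∪ N ⊆ u ∪ v) (hCu : C ⊆ u) : C ∪ N ⊆ u ∨ C ∪ N ⊆ v := by
    have hsplit : (C ∪ N) ∩ v = N ∩ uᶜ := by grind
    have hclopen : IsClopen ((C ∪ N) ∩ v) :=
      ⟨hclosed.inter hv, hsplit ▸ hN.inter hu.isOpen_compl⟩
    rcases isClopen_iff.1 hclopen with hempty | huniv
    · left; exact fun x hx ↦ (hcover hx).resolve_right fun hxv ↦ hempty.le ⟨hx, hxv⟩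
    · right; exact fun x _ ↦ (huniv.ge (mem_univ x)).2
  rw [isPreconnected_iff_subset_of_fully_disjoint_closed hclosed]
  intro u v hu hv hcover huv
  rcases (isPreconnected_iff_subset_of_disjoint_closed.1 hC) u v hu hv
    (subset_union_left.trans hcover) (by simp [huv.inter_eq]) with hCu | hCv
  · exact subset_of_subset hu hv huv hcover hCu
  · exact (subset_of_subset hv hu huv.symm (union_comm u v ▸ hcover) hCv).symm

theorem isPreconnected_compl_connectedComponentIn_compl [PreconnectedSpace S] {A : Set S}
    (hAopen : IsOpen A) (hA : IsPreconnected A) (x : S) :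
    IsPreconnected (connectedComponentIn Aᶜ x)ᶜ := by
  set C := connectedComponentIn Aᶜ x with hCdef
  have hCA : C ⊆ Aᶜ := connectedComponentIn_subset _ _
  by_cases hx : x ∈ Aᶜ
  swap
  · simpa [hCdef, connectedComponentIn_eq_empty hx] using isPreconnected_univ
  have hopen : IsOpen Cᶜ := (isClosed_connectedComponentIn hAopen.isClosed_compl x).isOpen_compl
  -- A piece of `Cᶜ` missing `A` could be added to the component `C`.
  have eq_empty {M N : Set S} (hM : IsOpen M) (hN : IsOpen N) (hMN : Disjoint M N)
      (hcompl : Cᶜ = M ∪ N) (hAM : A ⊆ M) : N = ∅ := by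
    have hsub : C ∪ N ⊆ C :=
      (isPreconnected_union_of_compl_eq_union isPreconnected_connectedComponentIn hM hN hMN
        hcompl).subset_connectedComponentIn (.inl (mem_connectedComponentIn hx))
        (union_subset hCA (hMN.mono_left hAM).subset_compl_left)
    exact eq_empty_of_forall_notMem fun y hy ↦ (hcompl.ge (.inr hy)) (hsub (.inr hy))
  rw [isPreconnected_iff_subset_of_disjoint]
  intro u v hu hv hcover huv
  have hACc : A ⊆ Cᶜ := subset_compl_comm.1 hCA
  have hdisj : Disjoint (Cᶜ ∩ u) (Cᶜ ∩ v) := by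
    rwa [disjoint_iff_inter_eq_empty, ← inter_inter_distrib_left]
  have hunion : Cᶜ = (Cᶜ ∩ u) ∪ (Cᶜ ∩ v) := by
    rw [← inter_union_distrib_left, inter_eq_left.2 hcover]
  rcases isPreconnected_iff_subset_of_disjoint.1 hA u v hu hv (hACc.trans hcover)
    (subset_empty_iff.1 ((inter_subset_inter_left _ hACc).trans huv.le)) with hAu | hAv
  · have hv_empty := eq_empty (hopen.inter hu) (hopen.inter hv) hdisj hunion
      (subset_inter hACc hAu)
    rw [hv_empty, union_empty] at hunion
    exact .inl (inter_eq_left.1 hunion.symm)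
  · have hu_empty := eq_empty (hopen.inter hv) (hopen.inter hu) hdisj.symm
      (hunion.trans (union_comm _ _)) (subset_inter hACc hAv)
    rw [hu_empty, empty_union] at hunion
    exact .inr (inter_eq_left.1 hunion.symm)

theorem exists_continuousMap_eventually_zero_one [NormalSpace S] {A B : Set S}
    (hA : IsClosed A) (hB : IsClosed B) (hAB : Disjoint A B) :
    ∃ φ : C(S, ℝ), (∀ᶠ y in 𝓝ˢ A, φ y = 0) ∧ ∀ᶠ y in 𝓝ˢ B, φ y = 1 := by
  obtain ⟨V, hV, hAV, hVB⟩ :=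
    normal_exists_closure_subset hA hB.isOpen_compl hAB.subset_compl_right
  obtain ⟨W, hW, hBW, hWV⟩ :=
    normal_exists_closure_subset hB isClosed_closure.isOpen_compl (subset_compl_comm.1 hVB)
  obtain ⟨φ, hφV, hφW, -⟩ := exists_continuous_zero_one_of_isClosed
    (isClosed_closure (s := V)) (isClosed_closure (s := W))
    (disjoint_left.2 fun _ hv hw ↦ hWV hw hv)
  exact ⟨φ, mem_of_superset (hV.mem_nhdsSet.2 hAV) fun _ h ↦ hφV (subset_closure h),
    mem_of_superset (hW.mem_nhdsSet.2 hBW) fun _ h ↦ hφW (subset_closure h)⟩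

theorem exists_continuous_ne_zero_eqOn_of_exp_eqOn [NormalSpace S] {A B G : Set S} {f g : S → ℂ}
    (hA : IsClosed A) (hB : IsClosed B) (hAB : Disjoint A B) (hG : IsOpen G)
    (hcover : A ∪ G ∪ B = univ) (hg : Continuous g) (hgA : ∀ y ∉ A, g y ≠ 0)
    (hf : ContinuousOn f G) (hfg : EqOn (Complex.exp ∘ f) g G) :
    ∃ F : S → ℂ, Continuous F ∧ (∀ y, F y ≠ 0) ∧ EqOn F g B := by
  classical
  obtain ⟨φ, hφA, hφB⟩ := exists_continuousMap_eventually_zero_one hA hB hAB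
  let F : S → ℂ := A.piecewise 1 (B.piecewise g fun y ↦ Complex.exp (φ y * f y))
  have hFA : EqOn F 1 A := piecewise_eqOn _ _ _
  have hFB : EqOn F g B := fun y hy ↦ by simp [F, hy, hAB.notMem_of_mem_right hy]
  have hF {y} (hyA : y ∉ A) (hyB : y ∉ B) : F y = Complex.exp (φ y * f y) := by simp [F, hyA, hyB]
  refine ⟨F, continuous_iff_continuousAt.2 fun y ↦ ?_, fun y ↦ ?_, hFB⟩
  · by_cases hyA : y ∈ A
    · refine continuousAt_const.congr (f := fun _ ↦ 1) ?_
      filter_upwards [hφA.filter_mono (nhds_le_nhdsSet hyA),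
        hB.isOpen_compl.mem_nhds (hAB.notMem_of_mem_left hyA)] with w hw hwB
      by_cases hwA : w ∈ A
      · exact (hFA hwA).symm
      · simp [hF hwA hwB, hw]
    by_cases hyB : y ∈ B
    · refine hg.continuousAt.congr ?_
      filter_upwards [hφB.filter_mono (nhds_le_nhdsSet hyB), hA.isOpen_compl.mem_nhds hyA]
        with w hw hwA
      by_cases hwB : w ∈ B
      · exact (hFB hwB).symm
      · have hwG : w ∈ G := by have := hcover.ge (mem_univ w); grind
        simpa [hF hwA hwB, hw] using (hfg hwG).symm
    · have hyG : y ∈ G := by have := hcover.ge (mem_univ y); grind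
      refine ContinuousAt.congr (f := fun w ↦ Complex.exp (φ w * f w)) ?_ ?_
      · have := hf.continuousAt (hG.mem_nhds hyG)
        fun_prop
      · filter_upwards [hA.isOpen_compl.mem_nhds hyA, hB.isOpen_compl.mem_nhds hyB]
          with w hwA hwB using (hF hwA hwB).symm
  · by_cases hyA : y ∈ A
    · simp [hFA hyA]
    by_cases hyB : y ∈ B
    · rw [hFB hyB]; exact hgA y hyA
    · rw [hF hyA hyB]; exact Complex.exp_ne_zero _

end Topology

theorem isSimplyConnected_of_convex {E : Type*} [AddCommGroup E] [Module ℝ E] [TopologicalSpace E]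
    [ContinuousAdd E] [ContinuousSMul ℝ E] {C : Set E} (hC : Convex ℝ C) (hne : C.Nonempty) :
    IsSimplyConnected C :=
  have := hC.contractibleSpace hne
  inferInstanceAs (SimplyConnectedSpace C)

theorem not_eqOn_exp_comp_sub_sphere {L : ℂ → ℂ} {z : ℂ} {R : ℝ} (hR : 0 < R)
    (hL : ContinuousOn L (Metric.sphere z R)) :
    ¬ EqOn (Complex.exp ∘ L) (· - z) (Metric.sphere z R) := by
  intro hexp
  let g : ℝ → ℂ := fun t ↦ L (circleMap z R t) - t * Complex.I
  have hgcont : Continuous g :=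
    (hL.comp_continuous (continuous_circleMap z R) (circleMap_mem_sphere z hR.le)).sub
      (by fun_prop)
  have hgexp (t : ℝ) : Complex.exp (g t) = R := by
    have h : Complex.exp (L (circleMap z R t)) = circleMap z R t - z :=
      hexp (circleMap_mem_sphere z hR.le t)
    rw [Complex.exp_sub, h, circleMap_sub_center, circleMap_zero,
      mul_div_cancel_right₀ _ (Complex.exp_ne_zero _)]
  have hper : g (2 * Real.pi) = g 0 := Complex.isCoveringMap_exp.const_of_comp hgcont
    (fun t s ↦ Subtype.ext ((hgexp t).trans (hgexp s).symm)) _ _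
  have hloop : circleMap z R (2 * Real.pi) = circleMap z R 0 := by
    simpa using periodic_circleMap z R 0
  simp [g, hloop, Real.pi_ne_zero] at hper

theorem eq_empty_of_isCompact_of_isOpen_union {A G : Set ℂ} (hG : IsOpen G)
    (hGsc : IsSimplyConnected G) (hA : IsCompact A) (hAG : Disjoint A G) (hunion : IsOpen (A ∪ G)) :
    A = ∅ := by
  rw [eq_empty_iff_forall_notMem]
  intro z hz
  obtain ⟨f, hf, hfexp⟩ := Complex.exists_continuousOn_eqOn_exp_comp (U := G) (g := (· - z))
    hGsc hG (by fun_prop) (by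
      rintro ⟨w, hw, hwz⟩
      exact hAG.notMem_of_mem_left hz (sub_eq_zero.1 hwz ▸ hw))
  obtain ⟨R, hR, hAR⟩ := hA.isBounded.subset_ball_lt 0 z
  -- Cutting off the logarithm of `w - z` near `A` extends `w - z` from a large circle to a nowhere
  -- vanishing function `F` on the plane, which has a logarithm too.
  obtain ⟨F, hF, hF0, hFeq⟩ := exists_continuous_ne_zero_eqOn_of_exp_eqOn
    (B := (A ∪ G)ᶜ ∪ (Metric.ball z R)ᶜ) hA.isClosed
    (hunion.isClosed_compl.union Metric.isOpen_ball.isClosed_compl)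
    (disjoint_left.2 (by grind)) hG (by grind)
    (g := (· - z)) (by fun_prop) (fun w hw hwz ↦ hw (sub_eq_zero.1 hwz ▸ hz)) hf hfexp
  obtain ⟨L, hL, hLexp⟩ := Complex.exists_continuousOn_eqOn_exp_comp (U := univ) (g := F)
    (isSimplyConnected_of_convex convex_univ univ_nonempty) isOpen_univ
    hF.continuousOn (by simpa using hF0)
  refine not_eqOn_exp_comp_sub_sphere (z := z) hR (hL.mono (subset_univ _)) fun w hw ↦ ?_
  have hwball : w ∉ Metric.ball z R := Metric.sphere_disjoint_ball.notMem_of_mem_left hw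
  exact (hLexp (mem_univ w)).trans (hFeq (.inr hwball))

theorem isPreconnected_compl_coe_image {G : Set ℂ} (hG : IsOpen G) (hGsc : IsSimplyConnected G) :
    IsPreconnected ((fun z : ℂ ↦ (z : OnePoint ℂ)) '' G)ᶜ := by
  set K := ((fun z : ℂ ↦ (z : OnePoint ℂ)) '' G)ᶜ
  have hK : IsClosed K := (isOpenEmbedding_coe.isOpenMap G hG).isClosed_compl
  have mem_K (z : ℂ) : (z : OnePoint ℂ) ∈ K ↔ z ∉ G := by simp [K]
  have subset_of_infty_mem {u v : Set (OnePoint ℂ)} (hu : IsClosed u) (hv : IsClosed v)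
      (huv : Disjoint u v) (hcover : K ⊆ u ∪ v) (hinf : ∞ ∈ u) : K ⊆ u := by
    have hcompact : IsCompact ((↑) ⁻¹' (K ∩ v) : Set ℂ) :=
      ((isClosed_iff_of_notMem fun h ↦ huv.notMem_of_mem_left hinf h.2).1 (hK.inter hv)).2
    have hunion : (↑) ⁻¹' (K ∩ v) ∪ G = ((↑) ⁻¹' (K ∩ u) : Set ℂ)ᶜ := by
      ext z
      have hz_cover : z ∉ G → ↑z ∈ u ∪ v := fun h ↦ hcover ((mem_K z).2 h)
      have hz_disj : ↑z ∈ u → ↑z ∉ v := fun h ↦ huv.notMem_of_mem_left h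
      simp only [mem_union, mem_preimage, mem_inter_iff, mem_compl_iff, mem_K] at hz_cover ⊢
      tauto
    have hempty := eq_empty_of_isCompact_of_isOpen_union hG hGsc hcompact
      (disjoint_left.2 fun z hz ↦ (mem_K z).1 hz.1)
      (hunion ▸ ((hK.inter hu).preimage continuous_coe).isOpen_compl)
    intro y hy
    induction y with
    | infty => exact hinf
    | coe z => exact (hcover hy).resolve_right fun hv ↦ hempty.le (⟨hy, hv⟩ : z ∈ (↑) ⁻¹' (K ∩ v))
  rw [isPreconnected_iff_subset_of_fully_disjoint_closed hK]
  intro u v hu hv hcover huv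
  rcases hcover (show ∞ ∈ K by simp [K]) with hinf | hinf
  · exact .inl (subset_of_infty_mem hu hv huv hcover hinf)
  · exact .inr (subset_of_infty_mem hv hu huv.symm (union_comm u v ▸ hcover) hinf)

section Holonomy

variable {Y : Type*} [TopologicalSpace Y] {x₀ x y z : Y}

/-- The class in `π₁(Y, x₀)` of the loop that follows `p`, once the end points of `p` are joined to
the base point by the chosen classes `b`. As the product of `π₁` composes loops from right to left,
holonomies act on the left. -/
noncomputable def holonomy (b : ∀ y, Path.Homotopic.Quotient x₀ y) (p : Path x y) :
    FundamentalGroup Y x₀ :=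
  ((b x).trans (.mk p)).trans (b y).symm

variable (b : ∀ y, Path.Homotopic.Quotient x₀ y)

theorem holonomy_congr {p q : Path x y} (h : p.Homotopic q) : holonomy b p = holonomy b q := by
  rw [holonomy, holonomy, Path.Homotopic.Quotient.eq.2 h]

theorem homotopicQuotient_symm_trans_trans (p : Path.Homotopic.Quotient x y)
    (q : Path.Homotopic.Quotient y z) : p.symm.trans (p.trans q) = q := by
  rw [← Path.Homotopic.Quotient.trans_assoc]
  simp

theorem holonomy_trans (p : Path x y) (q : Path y z) :
    holonomy b (p.trans q) = holonomy b q * holonomy b p := by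
  simp only [holonomy, FundamentalGroup.mul_def, Path.Homotopic.Quotient.mk_trans,
    Path.Homotopic.Quotient.trans_assoc, homotopicQuotient_symm_trans_trans]

theorem holonomy_refl (x : Y) : holonomy b (Path.refl x) = 1 := by
  rw [FundamentalGroup.one_def, holonomy]
  simp

theorem holonomy_cast {x' y' : Y} (p : Path x y) (hx : x' = x) (hy : y' = y) :
    holonomy b (p.cast hx hy) = holonomy b p := by
  subst hx hy
  rfl

theorem homotopic_refl_of_holonomy_eq_one {p : Path x x} (h : holonomy b p = 1) :
    p.Homotopic (Path.refl x) := by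
  rw [holonomy, FundamentalGroup.one_def] at h
  rw [← Path.Homotopic.Quotient.eq]
  calc Path.Homotopic.Quotient.mk p
      = (b x).symm.trans ((((b x).trans (.mk p)).trans (b x).symm).trans (b x)) := by
        simp [homotopicQuotient_symm_trans_trans]
    _ = .mk (Path.refl x) := by rw [h]; simp

theorem holonomy_subpath_mul (γ : Path x y) (r s t : unitInterval) :
    holonomy b (γ.subpath s t) * holonomy b (γ.subpath r s) = holonomy b (γ.subpath r t) := by
  rw [← holonomy_trans]
  exact holonomy_congr b ⟨Path.Homotopy.subpathTransSubpath γ r s t⟩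

theorem eq_holonomy_mul_of_locally {k : Y → FundamentalGroup Y x₀} (γ : Path x y)
    (hk : ∀ t, ∃ C ∈ 𝓝 (γ t), ∀ u v (p : Path u v), (∀ s, p s ∈ C) → k v = holonomy b p * k u) :
    k y = holonomy b γ * k x := by
  let f : unitInterval → FundamentalGroup Y x₀ :=
    fun t ↦ (holonomy b (γ.subpath 0 t))⁻¹ * k (γ t)
  have hf : IsLocallyConstant f := by
    rw [IsLocallyConstant.iff_eventually_eq]
    intro t
    obtain ⟨C, hC, hkC⟩ := hk t
    have huIcc : ∀ᶠ s in 𝓝 t, uIcc t s ⊆ γ ⁻¹' C :=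
      tendsto_smallSets_iff.1 (tendsto_const_nhds.uIcc tendsto_id) _
        (γ.continuous.continuousAt.preimage_mem_nhds hC)
    filter_upwards [huIcc] with s hs
    have hsub (r) : γ.subpath t s r ∈ C :=
      image_subset_iff.2 hs (γ.range_subpath t s ▸ mem_range_self r)
    calc f s = (holonomy b (γ.subpath t s) * holonomy b (γ.subpath 0 t))⁻¹ *
          (holonomy b (γ.subpath t s) * k (γ t)) := by
          rw [holonomy_subpath_mul, ← hkC _ _ _ hsub]
      _ = f t := by simp only [f]; group
  have h01 : f 0 = f 1 := hf.apply_eq_of_preconnectedSpace 0 1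
  simp only [f, Path.subpath_self, holonomy_refl, Path.subpath_zero_one, holonomy_cast, γ.source,
    γ.target, inv_one, one_mul] at h01
  exact (eq_inv_mul_iff_mul_eq.1 h01).symm

end Holonomy

section Segment

variable {E : Type*} [AddCommGroup E] [Module ℝ E] [TopologicalSpace E] [ContinuousAdd E]
  [ContinuousSMul ℝ E] {U C : Set E}

theorem homotopic_of_range_subset_convex (hC : Convex ℝ C) (hCU : C ⊆ U) {x y : U}
    (p q : Path x y) (hp : ∀ t, ↑(p t) ∈ C) (hq : ∀ t, ↑(q t) ∈ C) : p.Homotopic q := by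
  have hxC : ↑x ∈ C := by simpa using hp 0
  have hyC : ↑y ∈ C := by simpa using hp 1
  have := (isSimplyConnected_of_convex hC ⟨x, hxC⟩).simplyConnectedSpace
  let lift (r : Path x y) (hr : ∀ t, ↑(r t) ∈ C) : Path (⟨x, hxC⟩ : C) ⟨y, hyC⟩ :=
    { toFun := fun t ↦ ⟨r t, hr t⟩
      source' := by simp
      target' := by simp }
  exact (SimplyConnectedSpace.paths_homotopic (lift p hp) (lift q hq)).map
    ⟨inclusion hCU, continuous_inclusion hCU⟩

/-- The line segment from `x` to `y` as a path in a set `U` containing it. -/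
def segmentPath {x y : E} (h : segment ℝ x y ⊆ U) :
    Path (⟨x, h (left_mem_segment ℝ x y)⟩ : U) ⟨y, h (right_mem_segment ℝ x y)⟩ where
  toFun t := ⟨Path.segment x y t, h (Path.range_segment x y ▸ mem_range_self t)⟩
  source' := by simp
  target' := by simp

theorem segmentPath_mem {x y : E} (h : segment ℝ x y ⊆ U) (t : unitInterval) :
    ↑(segmentPath h t) ∈ segment ℝ x y :=
  Path.range_segment x y ▸ mem_range_self t

open Classical in
/-- The holonomy along the segment from `x` to `y`, with the junk value `1` when the segment leaves
`U`. -/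
noncomputable def segmentHolonomy {x₀ : U} (b : ∀ y, Path.Homotopic.Quotient x₀ y) (x y : E) :
    FundamentalGroup U x₀ :=
  if h : segment ℝ x y ⊆ U then holonomy b (segmentPath h) else 1

variable {x₀ : U} (b : ∀ y, Path.Homotopic.Quotient x₀ y)

theorem holonomy_eq_segmentHolonomy (hC : Convex ℝ C) (hCU : C ⊆ U) {x y : U} (p : Path x y)
    (hp : ∀ t, ↑(p t) ∈ C) : holonomy b p = segmentHolonomy b (x : E) y := by
  have hxC : ↑x ∈ C := by simpa using hp 0
  have hyC : ↑y ∈ C := by simpa using hp 1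
  have hsegC := hC.segment_subset hxC hyC
  rw [segmentHolonomy, dif_pos (hsegC.trans hCU)]
  exact holonomy_congr b (homotopic_of_range_subset_convex hC hCU _ _ hp
    fun t ↦ hsegC (segmentPath_mem _ t))

theorem segmentHolonomy_mul (hC : Convex ℝ C) (hCU : C ⊆ U) {x y z : E} (hx : x ∈ C) (hy : y ∈ C)
    (hz : z ∈ C) : segmentHolonomy b y z * segmentHolonomy b x y = segmentHolonomy b x z := by
  have hxy := hC.segment_subset hx hy
  have hyz := hC.segment_subset hy hz
  let p := segmentPath (hxy.trans hCU)
  let q := segmentPath (hyz.trans hCU)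
  have hp t : ↑(p t) ∈ C := hxy (segmentPath_mem _ t)
  have hq t : ↑(q t) ∈ C := hyz (segmentPath_mem _ t)
  have hpq t : ↑(p.trans q t) ∈ C := by
    rw [Path.trans_apply]
    split_ifs
    exacts [hp _, hq _]
  rw [← holonomy_eq_segmentHolonomy b hC hCU p hp, ← holonomy_eq_segmentHolonomy b hC hCU q hq,
    ← holonomy_eq_segmentHolonomy b hC hCU (p.trans q) hpq, holonomy_trans]

end Segment

section Lattice

/-- Signed number of times the lattice edge from `(a, b)` to `(a + 1, b)` crosses the vertical
half-line that starts strictly above `c`, just to its left. -/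
def rayCrossing (c : ℤ × ℤ) (a b : ℤ) : ℤ :=
  if a + 1 = c.1 ∧ c.2 < b then 1 else 0

/-- `u` counts crossings with the half-line above `c`: among the points of `V`, it changes by
`rayCrossing c` along horizontal edges and not at all along vertical ones. -/
def IsCutPotential (V : Set (ℤ × ℤ)) (c : ℤ × ℤ) (u : ℤ × ℤ → ℤ) : Prop :=
  (∀ a b, (a, b) ∈ V → (a + 1, b) ∈ V → u (a + 1, b) = u (a, b) + rayCrossing c a b) ∧
    ∀ a b, (a, b) ∈ V → (a, b + 1) ∈ V → u (a, b + 1) = u (a, b)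

/-- The half-line above `c` has total crossing number zero with every lattice loop in `V`. For
`c ∉ V` this says that no loop in `V` winds around `c`. -/
def HasCutPotential (V : Set (ℤ × ℤ)) (c : ℤ × ℤ) : Prop :=
  ∃ u, IsCutPotential V c u

variable {V W : Set (ℤ × ℤ)} {c c' m M : ℤ × ℤ}

theorem HasCutPotential.mono (h : HasCutPotential V c) (hWV : W ⊆ V) : HasCutPotential W c :=
  h.imp fun _ hu ↦ ⟨fun a b ha hb ↦ hu.1 a b (hWV ha) (hWV hb),
    fun a b ha hb ↦ hu.2 a b (hWV ha) (hWV hb)⟩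

theorem hasCutPotential_congr (f : ℤ × ℤ → ℤ)
    (hhor : ∀ a b, (a, b) ∈ V → (a + 1, b) ∈ V →
      rayCrossing c' a b = rayCrossing c a b + (f (a + 1, b) - f (a, b)))
    (hver : ∀ a b, (a, b) ∈ V → (a, b + 1) ∈ V → f (a, b + 1) = f (a, b)) :
    HasCutPotential V c ↔ HasCutPotential V c' := by
  constructor
  · rintro ⟨u, hu⟩
    refine ⟨u + f, fun a b ha hb ↦ ?_, fun a b ha hb ↦ ?_⟩
    · linarith [hu.1 a b ha hb, hhor a b ha hb, Pi.add_apply u f (a + 1, b),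
        Pi.add_apply u f (a, b)]
    · rw [Pi.add_apply, Pi.add_apply, hu.2 a b ha hb, hver a b ha hb]
  · rintro ⟨u, hu⟩
    refine ⟨u - f, fun a b ha hb ↦ ?_, fun a b ha hb ↦ ?_⟩
    · linarith [hu.1 a b ha hb, hhor a b ha hb, Pi.sub_apply u f (a + 1, b),
        Pi.sub_apply u f (a, b)]
    · rw [Pi.sub_apply, Pi.sub_apply, hu.2 a b ha hb, hver a b ha hb]

theorem hasCutPotential_up {p q : ℤ} (h : (p, q + 1) ∉ V) :
    HasCutPotential V (p, q) ↔ HasCutPotential V (p, q + 1) := by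
  refine hasCutPotential_congr 0 (fun a b _ hb ↦ ?_) fun _ _ _ _ ↦ rfl
  have hne : ¬(a + 1 = p ∧ b = q + 1) := by
    rintro ⟨rfl, rfl⟩
    exact h hb
  simp only [rayCrossing, Pi.zero_apply]
  split_ifs <;> omega

theorem hasCutPotential_right {p q q' : ℤ} (h : (p, q) ∉ V) (h' : (p + 1, q') ∉ V)
    (hq : q ≤ q' + 1) (hq' : q' ≤ q + 1) :
    HasCutPotential V (p, q) ↔ HasCutPotential V (p + 1, q') := by
  have hne {a b} (hab : (a, b) ∈ V) : ¬(a = p ∧ b = q) ∧ ¬(a = p + 1 ∧ b = q') :=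
    ⟨by rintro ⟨rfl, rfl⟩; exact h hab, by rintro ⟨rfl, rfl⟩; exact h' hab⟩
  -- The two half-lines bound the column of points above `(p, q)`.
  refine hasCutPotential_congr (fun v ↦ if v.1 = p ∧ q < v.2 then -1 else 0)
    (fun a b ha hb ↦ ?_) fun a b ha hb ↦ ?_
  all_goals
    have := hne ha
    have := hne hb
    simp only [rayCrossing]
    split_ifs <;> omega

theorem hasCutPotential_iff_of_adjacent (hc : c ∉ V) (hc' : c' ∉ V) (h : c ≤ c' + 1)
    (h' : c' ≤ c + 1) : HasCutPotential V c ↔ HasCutPotential V c' := by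
  obtain ⟨p, q⟩ := c
  obtain ⟨p', q'⟩ := c'
  simp only [Prod.le_def, Prod.fst_add, Prod.snd_add, Prod.fst_one, Prod.snd_one] at h h'
  rcases (by omega : p' = p + 1 ∨ p = p' + 1 ∨ p' = p) with rfl | rfl | rfl
  · exact hasCutPotential_right hc hc' h.2 h'.2
  · exact (hasCutPotential_right hc' hc h'.2 h.2).symm
  · rcases (by omega : q' = q + 1 ∨ q = q' + 1 ∨ q' = q) with rfl | rfl | rfl
    · exact hasCutPotential_up hc'
    · exact (hasCutPotential_up hc).symm
    · rfl

theorem hasCutPotential_of_notMem_Icc (hV : V ⊆ Icc m M) (hc : c ∉ Icc m M) :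
    HasCutPotential V c := by
  have hbox {a b} (h : (a, b) ∈ V) : (m.1 ≤ a ∧ m.2 ≤ b) ∧ a ≤ M.1 ∧ b ≤ M.2 := hV h
  simp only [mem_Icc, Prod.le_def] at hc
  by_cases hbelow : c.2 < m.2
  · refine ⟨fun v ↦ if c.1 ≤ v.1 then 1 else 0, fun a b ha _ ↦ ?_, fun _ _ _ _ ↦ rfl⟩
    have := hbox ha
    simp only [rayCrossing]
    split_ifs <;> omega
  · refine ⟨0, fun a b ha hb ↦ ?_, fun _ _ _ _ ↦ rfl⟩
    have := hbox ha
    have := hbox hb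
    simp only [rayCrossing, Pi.zero_apply]
    split_ifs <;> omega

variable {G : Type*} [Group G] {E : ℤ × ℤ → ℤ × ℤ → G} {k f : ℤ × ℤ → G} {a b : ℤ}

/-- `h` is a parallel section over `V` of the connection on the square lattice whose transport
along the edge from `v` to `w` is left multiplication by `E v w`. -/
def IsParallelOn (E : ℤ × ℤ → ℤ × ℤ → G) (V : Set (ℤ × ℤ)) (h : ℤ × ℤ → G) : Prop :=
  (∀ a b, (a, b) ∈ V → (a + 1, b) ∈ V → h (a + 1, b) = E (a, b) (a + 1, b) * h (a, b)) ∧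
    ∀ a b, (a, b) ∈ V → (a, b + 1) ∈ V → h (a, b + 1) = E (a, b) (a, b + 1) * h (a, b)

/-- The connection `E` has trivial transport around every unit square with vertices in `V`. -/
def IsFlatOn (E : ℤ × ℤ → ℤ × ℤ → G) (V : Set (ℤ × ℤ)) : Prop :=
  ∀ a b, (a, b) ∈ V → (a + 1, b) ∈ V → (a, b + 1) ∈ V → (a + 1, b + 1) ∈ V →
    E (a + 1, b) (a + 1, b + 1) * E (a, b) (a + 1, b) =
      E (a, b + 1) (a + 1, b + 1) * E (a, b) (a, b + 1)

theorem IsFlatOn.mono (h : IsFlatOn E V) (hWV : W ⊆ V) : IsFlatOn E W :=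
  fun a b h₀₀ h₁₀ h₀₁ h₁₁ ↦ h a b (hWV h₀₀) (hWV h₁₀) (hWV h₀₁) (hWV h₁₁)

theorem IsParallelOn.mul_right (hk : IsParallelOn E V k) (hf : IsParallelOn 1 V f) :
    IsParallelOn E V (k * f) := by
  constructor
  · intro a b ha hb
    simp only [Pi.mul_apply, hk.1 a b ha hb, hf.1 a b ha hb, Pi.one_apply, one_mul, mul_assoc]
  · intro a b ha hb
    simp only [Pi.mul_apply, hk.2 a b ha hb, hf.2 a b ha hb, Pi.one_apply, one_mul, mul_assoc]

theorem IsParallelOn.exists_insert (hW : ∀ v ∈ W, v.2 ≤ b ∨ v.2 = b + 1 ∧ a < v.1)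
    (hk : IsParallelOn E W k)
    (hcompat : (a + 1, b + 1) ∈ W → (a, b) ∈ W → k (a + 1, b + 1) =
      E (a, b + 1) (a + 1, b + 1) * (E (a, b) (a, b + 1) * k (a, b))) :
    ∃ h, IsParallelOn E (insert (a, b + 1) W) h := by
  classical
  let g := if (a, b) ∈ W then E (a, b) (a, b + 1) * k (a, b)
    else (E (a, b + 1) (a + 1, b + 1))⁻¹ * k (a + 1, b + 1)
  have hmem {i j} (h : (i, j) ∈ insert (a, b + 1) W) :
      (i = a ∧ j = b + 1) ∨ (i, j) ∈ W ∧ (j ≤ b ∨ j = b + 1 ∧ a < i) :=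
    h.imp Prod.mk.inj fun h ↦ ⟨h, hW _ h⟩
  have hne {i j : ℤ} (h : j ≤ b ∨ j = b + 1 ∧ a < i) : (i, j) ≠ (a, b + 1) := by
    rw [Ne, Prod.mk.injEq]
    omega
  refine ⟨Function.update k (a, b + 1) g, fun i j h h' ↦ ?_, fun i j h h' ↦ ?_⟩
  · rcases hmem h with ⟨rfl, rfl⟩ | ⟨hW₀, hlow⟩ <;> rcases hmem h' with h' | ⟨hW₁, hlow'⟩
    · omega
    · rw [Function.update_of_ne (hne hlow'), Function.update_self]
      by_cases hD : (i, b) ∈ W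
      · simp only [g, if_pos hD, hcompat hW₁ hD]
      · simp only [g, if_neg hD, mul_inv_cancel_left]
    · omega
    · rw [Function.update_of_ne (hne hlow'), Function.update_of_ne (hne hlow), hk.1 i j hW₀ hW₁]
  · rcases hmem h with ⟨rfl, rfl⟩ | ⟨hW₀, hlow⟩ <;> rcases hmem h' with h' | ⟨hW₁, hlow'⟩
    · omega
    · omega
    · obtain ⟨rfl, rfl⟩ : i = a ∧ j = b := by omega
      rw [Function.update_of_ne (hne hlow), Function.update_self]
      exact if_pos hW₀
    · rw [Function.update_of_ne (hne hlow'), Function.update_of_ne (hne hlow), hk.2 i j hW₀ hW₁]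

theorem IsParallelOn.exists_twist (hW : ∀ v ∈ W, v.2 ≤ b ∨ v.2 = b + 1 ∧ a < v.1)
    (hk : IsParallelOn E W k) (hright : (a + 1, b + 1) ∈ W) (hdown : (a, b) ∈ W)
    (hcut : HasCutPotential (insert (a, b + 1) W) (a + 1, b)) (g : G) :
    ∃ h, IsParallelOn E W h ∧ h (a, b) = k (a, b) ∧ h (a + 1, b + 1) = k (a + 1, b + 1) * g := by
  obtain ⟨u, hu⟩ := hcut
  have hjump : u (a + 1, b + 1) = u (a, b) + 1 := by
    rw [hu.1 a (b + 1) (mem_insert _ _) (.inr hright), hu.2 a b (.inr hdown) (mem_insert _ _),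
      rayCrossing, if_pos ⟨rfl, Int.lt_succ b⟩]
  have hf : IsParallelOn 1 W fun v ↦ if u v = u (a + 1, b + 1) then g else 1 := by
    constructor
    · intro i j h h'
      have hcross : rayCrossing (a + 1, b) i j = 0 := if_neg fun hij ↦ by
        have := hW _ h
        omega
      simp only [hu.1 i j (.inr h) (.inr h'), hcross, add_zero, Pi.one_apply, one_mul]
    · intro i j h h'
      simp only [hu.2 i j (.inr h) (.inr h'), Pi.one_apply, one_mul]
  exact ⟨_, hk.mul_right hf, by simp [hjump], by simp⟩

theorem IsParallelOn.exists_insert_of_flat (hW : ∀ v ∈ W, v.2 ≤ b ∨ v.2 = b + 1 ∧ a < v.1)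
    (hk : IsParallelOn E W k) (hflat : IsFlatOn E (insert (a, b + 1) W))
    (hcut : (a + 1, b) ∉ insert (a, b + 1) W →
      HasCutPotential (insert (a, b + 1) W) (a + 1, b)) :
    ∃ h, IsParallelOn E (insert (a, b + 1) W) h := by
  by_cases hcorner : (a + 1, b + 1) ∈ W ∧ (a, b) ∈ W
  swap
  · exact hk.exists_insert hW fun hright hdown ↦ absurd ⟨hright, hdown⟩ hcorner
  obtain ⟨hright, hdown⟩ := hcorner
  by_cases hdiag : (a + 1, b) ∈ W
  · refine hk.exists_insert hW fun _ _ ↦ ?_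
    rw [hk.2 (a + 1) b hdiag hright, hk.1 a b hdown hdiag, ← mul_assoc,
      hflat a b (.inr hdown) (.inr hdiag) (mem_insert _ _) (.inr hright), mul_assoc]
  · have hdiag' : (a + 1, b) ∉ insert (a, b + 1) W := by
      rintro (h | h)
      · simp at h
      · exact hdiag h
    obtain ⟨h, hh, hdown_eq, hright_eq⟩ := hk.exists_twist hW hright hdown (hcut hdiag')
      ((k (a + 1, b + 1))⁻¹ * (E (a, b + 1) (a + 1, b + 1) * (E (a, b) (a, b + 1) * k (a, b))))
    refine hh.exists_insert hW fun _ _ ↦ ?_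
    rw [hright_eq, hdown_eq, mul_inv_cancel_left]

theorem hasCutPotential_of_forall_snd_le (hW : ∀ v ∈ W, v.2 ≤ c.2) : HasCutPotential W c :=
  ⟨0, fun a b ha _ ↦ by simp [rayCrossing, (hW _ ha).not_gt], fun _ _ _ _ ↦ rfl⟩

theorem exists_isParallelOn_of_isFlatOn (V : Finset (ℤ × ℤ)) (hflat : IsFlatOn E (V : Set (ℤ × ℤ)))
    (hcut : ∀ c ∉ V, HasCutPotential (V : Set (ℤ × ℤ)) c) :
    ∃ h, IsParallelOn E (V : Set (ℤ × ℤ)) h := by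
  classical
  -- Points are added row by row from the bottom, each row from right to left.
  induction V using Finset.induction_on_max_value (f := fun v : ℤ × ℤ ↦ toLex (v.2, -v.1)) with
  | empty => exact ⟨1, by simp [IsParallelOn]⟩
  | insert v W hv hmax ih =>
    obtain ⟨a, b, rfl⟩ : ∃ a b, v = (a, b + 1) := ⟨v.1, v.2 - 1, by simp⟩
    have hW : ∀ w ∈ (W : Set (ℤ × ℤ)), w.2 ≤ b ∨ w.2 = b + 1 ∧ a < w.1 := by
      intro w hw
      have hle := Prod.Lex.toLex_le_toLex.1 (hmax w hw)
      have hne : ¬(w.1 = a ∧ w.2 = b + 1) := fun h ↦ hv (Prod.ext (y := (a, b + 1)) h.1 h.2 ▸ hw)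
      dsimp only at hle
      omega
    rw [Finset.coe_insert] at hflat hcut ⊢
    obtain ⟨k, hk⟩ := ih (hflat.mono (subset_insert _ _)) fun c hc ↦ by
      rcases eq_or_ne c (a, b + 1) with rfl | hne
      · exact hasCutPotential_of_forall_snd_le fun w hw ↦ by
          have := hW w hw
          dsimp only
          omega
      · exact (hcut c (by simp [hne, hc])).mono (subset_insert _ _)
    exact hk.exists_insert_of_flat hW hflat fun hdiag ↦ hcut _ (by simpa using hdiag)

end Lattice

section Grid

/-- The index of the half-open square of the grid of mesh `δ` that contains `z`. -/
noncomputable def gridCell (δ : ℝ) (z : ℂ) : ℤ × ℤ :=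
  (⌊z.re / δ⌋, ⌊z.im / δ⌋)

/-- The lower left corner of the square of index `v` in the grid of mesh `δ`. -/
def gridPoint (δ : ℝ) (v : ℤ × ℤ) : ℂ :=
  ⟨v.1 * δ, v.2 * δ⟩

open Classical in
/-- The indices between `m` and `M` of the grid squares contained in `U`. -/
noncomputable def innerCells (δ : ℝ) (m M : ℤ × ℤ) (U : Set ℂ) : Finset (ℤ × ℤ) :=
  {v ∈ Finset.Icc m M | gridCell δ ⁻¹' {v} ⊆ U}

variable {δ : ℝ} {z w : ℂ} {c m M v : ℤ × ℤ} {U K : Set ℂ}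

theorem mem_innerCells : v ∈ innerCells δ m M U ↔ v ∈ Icc m M ∧ gridCell δ ⁻¹' {v} ⊆ U := by
  classical rw [innerCells, Finset.mem_filter, Finset.mem_Icc, mem_Icc]

theorem preimage_gridCell_innerCells_subset : gridCell δ ⁻¹' innerCells δ m M U ⊆ U :=
  fun _ hz ↦ (mem_innerCells.1 hz).2 rfl

theorem preimage_gridCell_Icc (hδ : 0 < δ) (m M : ℤ × ℤ) : gridCell δ ⁻¹' Icc m M =
    Ico (m.1 * δ) ((M.1 + 1) * δ) ×ℂ Ico (m.2 * δ) ((M.2 + 1) * δ) := by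
  have hfloor (a b : ℤ) (x : ℝ) : a ≤ ⌊x / δ⌋ ∧ ⌊x / δ⌋ ≤ b ↔ x ∈ Ico (a * δ) ((b + 1) * δ) := by
    rw [Int.le_floor, le_div_iff₀ hδ, ← Int.lt_add_one_iff, Int.floor_lt, div_lt_iff₀ hδ,
      Int.cast_add, Int.cast_one, mem_Ico]
  ext z
  rw [Complex.mem_reProdIm, ← hfloor, ← hfloor, mem_preimage, mem_Icc, Prod.le_def, Prod.le_def,
    and_and_and_comm, gridCell]

theorem gridCell_gridPoint (hδ : 0 < δ) (v : ℤ × ℤ) : gridCell δ (gridPoint δ v) = v := by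
  simp [gridCell, gridPoint, hδ.ne']

theorem convex_preimage_gridCell_Icc (hδ : 0 < δ) (m M : ℤ × ℤ) :
    Convex ℝ (gridCell δ ⁻¹' Icc m M) := by
  rw [preimage_gridCell_Icc hδ]
  exact ((convex_Ico _ _).linear_preimage Complex.reLm).inter
    ((convex_Ico _ _).linear_preimage Complex.imLm)

theorem isBounded_preimage_gridCell_Icc (hδ : 0 < δ) (m M : ℤ × ℤ) :
    Bornology.IsBounded (gridCell δ ⁻¹' Icc m M) := by
  rw [preimage_gridCell_Icc hδ]
  exact (Metric.isBounded_Ico _ _).reProdIm (Metric.isBounded_Ico _ _)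

theorem eventually_gridCell_mem_Icc (hδ : 0 < δ) (z : ℂ) :
    ∀ᶠ w in 𝓝 z, gridCell δ w ∈ Icc (gridCell δ z - 1) (gridCell δ z) := by
  change gridCell δ ⁻¹' _ ∈ 𝓝 z
  have hIoo (x : ℝ) : x ∈ Ioo ((⌊x / δ⌋ - 1) * δ) ((⌊x / δ⌋ + 1) * δ) := by
    rw [mem_Ioo, ← lt_div_iff₀ hδ, ← div_lt_iff₀ hδ]
    exact ⟨by linarith [Int.floor_le (x / δ)], Int.lt_floor_add_one _⟩
  rw [preimage_gridCell_Icc hδ]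
  refine mem_of_superset ((isOpen_Ioo.reProdIm isOpen_Ioo).mem_nhds ⟨hIoo z.re, hIoo z.im⟩) ?_
  rintro w ⟨hre, him⟩
  simpa [gridCell, Complex.mem_reProdIm] using
    (⟨Ioo_subset_Ico_self hre, Ioo_subset_Ico_self him⟩ : w ∈ Ico _ _ ×ℂ Ico _ _)

theorem dist_lt_of_gridCell_le (hδ : 0 < δ) (h : gridCell δ z ≤ gridCell δ w + 1)
    (h' : gridCell δ w ≤ gridCell δ z + 1) : dist z w < 4 * δ := by
  have hfloor {x y : ℝ} (h : ⌊x / δ⌋ ≤ ⌊y / δ⌋ + 1) : x - y < 2 * δ := by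
    rw [← div_lt_iff₀ hδ, sub_div]
    have : (⌊x / δ⌋ : ℝ) ≤ ⌊y / δ⌋ + 1 := by exact_mod_cast h
    linarith [Int.lt_floor_add_one (x / δ), Int.floor_le (y / δ)]
  have hre : |(z - w).re| < 2 * δ := abs_sub_lt_iff.2 ⟨hfloor h.1, hfloor h'.1⟩
  have him : |(z - w).im| < 2 * δ := abs_sub_lt_iff.2 ⟨hfloor h.2, hfloor h'.2⟩
  rw [Complex.dist_eq]
  linarith [Complex.norm_le_abs_re_add_abs_im (z - w)]

theorem exists_gridCell_mem_Icc (hδ : 0 < δ) (hK : Bornology.IsBounded K) :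
    ∃ m M, ∀ z ∈ K, gridCell δ z ∈ Icc m M := by
  obtain ⟨R, hR⟩ := hK.exists_norm_le
  have hfloor {x : ℝ} (hx : |x| ≤ R) : ⌊-R / δ⌋ ≤ ⌊x / δ⌋ ∧ ⌊x / δ⌋ ≤ ⌊R / δ⌋ := by
    rw [abs_le] at hx
    exact ⟨by gcongr; exact hx.1, by gcongr; exact hx.2⟩
  refine ⟨(⌊-R / δ⌋, ⌊-R / δ⌋), (⌊R / δ⌋, ⌊R / δ⌋), fun z hz ↦ ?_⟩
  have hre := hfloor ((Complex.abs_re_le_norm z).trans (hR z hz))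
  have him := hfloor ((Complex.abs_im_le_norm z).trans (hR z hz))
  exact ⟨⟨hre.1, him.1⟩, hre.2, him.2⟩

theorem exists_Icc_subset_innerCells (hU : IsOpen U) (hK : IsCompact K) (hKU : K ⊆ U) :
    ∃ δ > 0, ∃ m M, ∀ z ∈ K,
      Icc (gridCell δ z - 1) (gridCell δ z) ⊆ (innerCells δ m M U : Set (ℤ × ℤ)) := by
  obtain ⟨r, hr, hrU⟩ := hK.exists_thickening_subset_open hU hKU
  have hδ : 0 < r / 4 := by positivity
  obtain ⟨m, M, hbox⟩ := exists_gridCell_mem_Icc hδ hK.isBounded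
  refine ⟨r / 4, hδ, m - 1, M, fun z hz v hv ↦ mem_innerCells.2 ⟨?_, ?_⟩⟩
  · exact ⟨(sub_le_sub_right (hbox z hz).1 1).trans hv.1, hv.2.trans (hbox z hz).2⟩
  · rintro w rfl
    refine hrU (Metric.mem_thickening_iff.2 ⟨z, hz, ?_⟩)
    have hdist := dist_lt_of_gridCell_le hδ (hv.2.trans (le_add_of_nonneg_right zero_le_one))
      (sub_le_iff_le_add.1 hv.1)
    rwa [mul_div_cancel₀ r four_ne_zero] at hdist

-- Near `∞` no loop of inner cells winds around a cell, and this property propagates along the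
-- connected complement of `U`.
theorem hasCutPotential_innerCells (hδ : 0 < δ)
    (hU : IsPreconnected ((fun z : ℂ ↦ (z : OnePoint ℂ)) '' U)ᶜ) (hc : c ∉ innerCells δ m M U) :
    HasCutPotential (innerCells δ m M U : Set (ℤ × ℤ)) c := by
  have hV : (innerCells δ m M U : Set (ℤ × ℤ)) ⊆ Icc m M := fun _ hv ↦ (mem_innerCells.1 hv).1
  by_cases hbox : c ∈ Icc m M
  swap
  · exact hasCutPotential_of_notMem_Icc hV hbox
  obtain ⟨z, rfl, hz⟩ := not_subset.1 fun h ↦ hc (mem_innerCells.2 ⟨hbox, h⟩)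
  have houter {w : ℂ} (hw : (w : OnePoint ℂ) ∈ ((fun z : ℂ ↦ (z : OnePoint ℂ)) '' U)ᶜ) :
      gridCell δ w ∉ innerCells δ m M U :=
    fun h ↦ hw ⟨w, preimage_gridCell_innerCells_subset h, rfl⟩
  let P (x : OnePoint ℂ) : Prop :=
    x.elim True fun w ↦ HasCutPotential (innerCells δ m M U : Set (ℤ × ℤ)) (gridCell δ w)
  suffices P ∞ ↔ P z from this.1 trivial
  refine hU.induction₂ (fun x y ↦ P x ↔ P y) (fun x hx ↦ ?_) (fun _ _ _ _ _ _ ↦ Iff.trans)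
    (fun _ _ _ _ ↦ Iff.symm) (by simp) (by simpa using hz)
  induction x with
  | infty =>
    have hfar : ∀ᶠ w in coclosedCompact ℂ, gridCell δ w ∉ Icc m M := by
      rw [coclosedCompact_eq_cocompact, ← Metric.cobounded_eq_cocompact]
      exact Bornology.isBounded_def.1 (isBounded_preimage_gridCell_Icc hδ m M)
    refine eventually_nhdsWithin_of_eventually_nhds ?_
    rw [nhds_infty_eq, eventually_sup, eventually_map, eventually_pure]
    exact ⟨hfar.mono fun w hw ↦ iff_of_true trivial (hasCutPotential_of_notMem_Icc hV hw), Iff.rfl⟩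
  | coe w =>
    rw [eventually_nhdsWithin_iff, nhds_coe_eq, eventually_map]
    filter_upwards [eventually_gridCell_mem_Icc hδ w] with y hy hyU
    exact hasCutPotential_iff_of_adjacent (houter hx) (houter hyU) (sub_le_iff_le_add.1 hy.1)
      (hy.2.trans (le_add_of_nonneg_right zero_le_one))

variable {x₀ : U} (b : ∀ y, Path.Homotopic.Quotient x₀ y) {V : Set (ℤ × ℤ)}
  {h : ℤ × ℤ → FundamentalGroup U x₀}

/-- The connection on the square lattice that transports along segments between grid points. -/
noncomputable def gridConnection (δ : ℝ) (v w : ℤ × ℤ) : FundamentalGroup U x₀ :=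
  segmentHolonomy b (gridPoint δ v) (gridPoint δ w)

theorem segmentHolonomy_mul_of_gridCell (hδ : 0 < δ) (hVU : gridCell δ ⁻¹' V ⊆ U)
    (hv : Icc v (v + 1) ⊆ V) {x y z : ℂ} (hx : gridCell δ x ∈ Icc v (v + 1))
    (hy : gridCell δ y ∈ Icc v (v + 1)) (hz : gridCell δ z ∈ Icc v (v + 1)) :
    segmentHolonomy b y z * segmentHolonomy b x y = segmentHolonomy b x z :=
  segmentHolonomy_mul b (convex_preimage_gridCell_Icc hδ v (v + 1))
    ((preimage_mono hv).trans hVU) hx hy hz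

theorem Icc_prod_add_one_eq (a b : ℤ) :
    Icc (a, b) ((a, b) + 1) = {(a, b), (a + 1, b), (a, b + 1), (a + 1, b + 1)} := by
  ext ⟨i, j⟩
  simp only [mem_Icc, Prod.le_def, Prod.fst_add, Prod.snd_add, Prod.fst_one, Prod.snd_one,
    mem_insert_iff, mem_singleton_iff, Prod.mk.injEq]
  omega

theorem isFlatOn_gridConnection (hδ : 0 < δ) (hVU : gridCell δ ⁻¹' V ⊆ U) :
    IsFlatOn (gridConnection b δ) V := by
  intro i j h₀₀ h₁₀ h₀₁ h₁₁
  have hsub : Icc (i, j) ((i, j) + 1) ⊆ V := by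
    simp [Icc_prod_add_one_eq, insert_subset_iff, h₀₀, h₁₀, h₀₁, h₁₁]
  rw [gridConnection, gridConnection, segmentHolonomy_mul_of_gridCell b hδ hVU hsub,
    gridConnection, gridConnection, segmentHolonomy_mul_of_gridCell b hδ hVU hsub]
  all_goals
    rw [gridCell_gridPoint hδ, Icc_prod_add_one_eq]
    simp

theorem eq_gridConnection_mul_of_isParallelOn (hδ : 0 < δ) (hVU : gridCell δ ⁻¹' V ⊆ U)
    (hh : IsParallelOn (gridConnection b δ) V h) (hv : Icc v (v + 1) ⊆ V) {w : ℤ × ℤ}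
    (hw : w ∈ Icc v (v + 1)) : h w = gridConnection b δ v w * h v := by
  have hmul {w₁ w₂} (hw₁ : w₁ ∈ Icc v (v + 1)) (hw₂ : w₂ ∈ Icc v (v + 1)) :
      gridConnection b δ w₁ w₂ * gridConnection b δ v w₁ = gridConnection b δ v w₂ := by
    apply segmentHolonomy_mul_of_gridCell b hδ hVU hv <;>
      simp [gridCell_gridPoint hδ, hw₁.1, hw₁.2, hw₂.1, hw₂.2]
  obtain ⟨i, j⟩ := v
  rw [Icc_prod_add_one_eq] at hv hw hmul
  simp only [insert_subset_iff, singleton_subset_iff] at hv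
  obtain ⟨h₀₀, h₁₀, h₀₁, h₁₁⟩ := hv
  rcases hw with rfl | rfl | rfl | rfl
  · have hself := hmul (w₁ := (i, j)) (w₂ := (i, j)) (by simp) (by simp)
    rw [mul_eq_left.1 hself, one_mul]
  · exact hh.1 i j h₀₀ h₁₀
  · exact hh.2 i j h₀₀ h₀₁
  · rw [hh.2 (i + 1) j h₁₀ h₁₁, hh.1 i j h₀₀ h₁₀, ← mul_assoc, hmul (by simp) (by simp)]

/-- Extends a parallel section over the lattice to the plane, transporting it along the segment from
the corner of each grid square to the points of that square. -/
noncomputable def gridExtend (δ : ℝ) (h : ℤ × ℤ → FundamentalGroup U x₀) (z : ℂ) :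
    FundamentalGroup U x₀ :=
  segmentHolonomy b (gridPoint δ (gridCell δ z)) z * h (gridCell δ z)

theorem gridExtend_eq_segmentHolonomy_mul (hδ : 0 < δ) (hVU : gridCell δ ⁻¹' V ⊆ U)
    (hh : IsParallelOn (gridConnection b δ) V h) (hv : Icc v (v + 1) ⊆ V)
    (hz : gridCell δ z ∈ Icc v (v + 1)) (hw : gridCell δ w ∈ Icc v (v + 1)) :
    gridExtend b δ h w = segmentHolonomy b z w * gridExtend b δ h z := by
  have hv₀ : v ∈ Icc v (v + 1) := left_mem_Icc.2 (le_add_of_nonneg_right zero_le_one)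
  have hbase {z : ℂ} (hz : gridCell δ z ∈ Icc v (v + 1)) :
      gridExtend b δ h z = segmentHolonomy b (gridPoint δ v) z * h v := by
    rw [gridExtend, eq_gridConnection_mul_of_isParallelOn b hδ hVU hh hv hz, ← mul_assoc,
      gridConnection, segmentHolonomy_mul_of_gridCell b hδ hVU hv _ _ hz] <;>
    rwa [gridCell_gridPoint hδ]
  rw [hbase hw, hbase hz, ← mul_assoc, segmentHolonomy_mul_of_gridCell b hδ hVU hv _ hz hw]
  rwa [gridCell_gridPoint hδ]

theorem simplyConnectedSpace_of_isPreconnected_compl (hU : IsOpen U) (hUconn : IsConnected U)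
    (hUcompl : IsPreconnected ((fun z : ℂ ↦ (z : OnePoint ℂ)) '' U)ᶜ) :
    SimplyConnectedSpace U := by
  have hpath : PathConnectedSpace U :=
    isPathConnected_iff_pathConnectedSpace.1 (hU.isConnected_iff_isPathConnected.1 hUconn)
  rw [simply_connected_iff_loops_nullhomotopic]
  refine ⟨hpath, fun x γ ↦ ?_⟩
  let b y : Path.Homotopic.Quotient x y := .mk (PathConnectedSpace.somePath x y)
  obtain ⟨δ, hδ, m, M, hgrid⟩ := exists_Icc_subset_innerCells hU
    (isCompact_range (continuous_subtype_val.comp γ.continuous))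
    (range_subset_iff.2 fun t ↦ (γ t).2)
  have hVU := preimage_gridCell_innerCells_subset (δ := δ) (m := m) (M := M) (U := U)
  obtain ⟨h, hh⟩ := exists_isParallelOn_of_isFlatOn _ (isFlatOn_gridConnection b hδ hVU)
    fun c ↦ hasCutPotential_innerCells hδ hUcompl
  have hγ : gridExtend b δ h x = holonomy b γ * gridExtend b δ h x := by
    refine eq_holonomy_mul_of_locally b (k := fun y ↦ gridExtend b δ h y) γ fun t ↦
      ⟨_, continuous_subtype_val.continuousAt.preimage_mem_nhds
        (eventually_gridCell_mem_Icc hδ (γ t)), fun u v p hp ↦ ?_⟩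
    rw [holonomy_eq_segmentHolonomy b (convex_preimage_gridCell_Icc hδ _ _)
      ((preimage_mono (hgrid _ (mem_range_self t))).trans hVU) p hp]
    have hblock := hgrid _ (mem_range_self t)
    apply gridExtend_eq_segmentHolonomy_mul b hδ hVU hh (v := gridCell δ (γ t) - 1)
    · rwa [sub_add_cancel]
    · simpa using hp 0
    · simpa using hp 1
  exact homotopic_refl_of_holonomy_eq_one b (mul_eq_right.1 hγ.symm)

end Grid

theorem compl_coe_image_setOf_coe_notMem {S : Type*} {X : Set (OnePoint S)} (hX : ∞ ∈ X) :
    ((fun z : S ↦ (z : OnePoint S)) '' {z | ↑z ∉ X})ᶜ = X := by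
  ext y
  induction y <;> simp [hX]

theorem setOf_coe_notMem_connectedComponentIn_subset {Ω G : Set ℂ} (hG : IsOpen G)
    (hGsc : IsSimplyConnected G) (hΩG : Ω ⊆ G) :
    {z : ℂ | (z : OnePoint ℂ) ∉
      connectedComponentIn (((fun z : ℂ ↦ (z : OnePoint ℂ)) '' Ω)ᶜ) ∞} ⊆ G := by
  have hcompl : ((fun z : ℂ ↦ (z : OnePoint ℂ)) '' G)ᶜ ⊆
      connectedComponentIn (((fun z : ℂ ↦ (z : OnePoint ℂ)) '' Ω)ᶜ) ∞ :=
    (isPreconnected_compl_coe_image hG hGsc).subset_connectedComponentIn (by simp)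
      (compl_subset_compl.2 (image_mono hΩG))
  intro z hz
  by_contra hzG
  exact hz (hcompl (by simpa using hzG))

/-- Let `Ω ⊆ ℂ` be a domain, `X` the connected component of `∞` in `(ℂ ∪ {∞}) ∖ Ω`, and
`Ω̂ = (ℂ ∪ {∞}) ∖ X ⊆ ℂ`. Then `Ω̂` is a simply connected domain containing `Ω`, it is
contained in every simply connected domain `G` with `Ω ⊆ G ⊆ ℂ`, and consequently `Ω̂` is the
intersection of all such `G`. -/
theorem statement4 (Ω : Set ℂ) (hΩopen : IsOpen Ω) (hΩconn : IsConnected Ω)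
    (X : Set (OnePoint ℂ))
    (hX : X = connectedComponentIn (((fun z : ℂ => (z : OnePoint ℂ)) '' Ω)ᶜ) ∞)
    (Ωhat : Set ℂ) (hΩhat : Ωhat = {z : ℂ | (z : OnePoint ℂ) ∉ X}) :
    IsOpen Ωhat ∧ IsConnected Ωhat ∧ SimplyConnectedSpace Ωhat ∧ Ω ⊆ Ωhat ∧
      (∀ G : Set ℂ, IsOpen G → IsConnected G → SimplyConnectedSpace G → Ω ⊆ G → Ωhat ⊆ G) ∧
      Ωhat = ⋂₀ {G : Set ℂ | IsOpen G ∧ IsConnected G ∧ SimplyConnectedSpace G ∧ Ω ⊆ G} := by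
  subst hX hΩhat
  set X := connectedComponentIn (((fun z : ℂ => (z : OnePoint ℂ)) '' Ω)ᶜ) ∞
  have hXinf : ∞ ∈ X := mem_connectedComponentIn (by simp)
  have hΩ : IsOpen ((fun z : ℂ => (z : OnePoint ℂ)) '' Ω) := isOpenEmbedding_coe.isOpenMap Ω hΩopen
  have hopen : IsOpen {z : ℂ | (z : OnePoint ℂ) ∉ X} :=
    (isClosed_connectedComponentIn hΩ.isClosed_compl ∞).isOpen_compl.preimage continuous_coe
  have hsub : Ω ⊆ {z : ℂ | (z : OnePoint ℂ) ∉ X} :=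
    fun z hz hzX ↦ connectedComponentIn_subset _ _ hzX (mem_image_of_mem _ hz)
  have hXcompl : IsPreconnected Xᶜ := isPreconnected_compl_connectedComponentIn_compl hΩ
    (hΩconn.isPreconnected.image _ continuous_coe.continuousOn) ∞
  have hconn : IsConnected {z : ℂ | (z : OnePoint ℂ) ∉ X} :=
    ⟨hΩconn.nonempty.mono hsub, hXcompl.preimage_of_isOpenMap coe_injective
      isOpenEmbedding_coe.isOpenMap (by simpa [← compl_infty] using hXinf)⟩
  have hsc : SimplyConnectedSpace {z : ℂ | (z : OnePoint ℂ) ∉ X} :=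
    simplyConnectedSpace_of_isPreconnected_compl hopen hconn
      (by rw [compl_coe_image_setOf_coe_notMem hXinf]; exact isPreconnected_connectedComponentIn)
  have hmin (G : Set ℂ) (hG : IsOpen G) (_ : IsConnected G) (hGsc : SimplyConnectedSpace G)
      (hΩG : Ω ⊆ G) : {z : ℂ | (z : OnePoint ℂ) ∉ X} ⊆ G :=
    setOf_coe_notMem_connectedComponentIn_subset hG hGsc hΩG
  refine ⟨hopen, hconn, hsc, hsub, hmin, Subset.antisymm ?_ ?_⟩
  · exact subset_sInter fun G ⟨hG, hGconn, hGsc, hΩG⟩ ↦ hmin G hG hGconn hGsc hΩG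
  · exact sInter_subset_of_mem ⟨hopen, hconn, hsc, hsub⟩
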